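/- Let X ∈ ℝ^{d₁×d₂}, let I ⊆ [d₁] and J ⊆ [d₂] be index sets, and set C = X[:,J] (the columns of X indexed by J), R = X[I,:] (the rows of X indexed by I), and U = X[I,J]. If rank(U) = rank(X), then X = C U† R, where U† denotes the Moore–Penrose pseudoinverse of U. -/

import Mathlib

open scoped Matrix

/-- `B` satisfies the four Penrose conditions for being the Moore–Penrose pseudoinverse
of the real matrix `A`. -/
def IsMoorePenrose {m n : Type*} [Fintype m] [Fintype n]
    (A : Matrix m n ℝ) (B : Matrix n m ℝ) : Prop :=
  A * B * A = A ∧ B * A * B = B ∧ (A * B)ᵀ = A * B ∧ (B * A)ᵀ = B * A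

/-- The Moore–Penrose pseudoinverse `A†` of a real matrix, characterized (uniquely) by the
four Penrose conditions. -/
noncomputable def pinv {m n : Type*} [Fintype m] [Fintype n]
    (A : Matrix m n ℝ) : Matrix n m ℝ :=
  by classical exact if h : ∃ B, IsMoorePenrose A B then h.choose else 0

theorem exists_right_factor {l m n : Type*} [Fintype l] [Fintype m] [Fintype n]
    (A : Matrix l m ℝ) (B : Matrix m n ℝ) (h : (A * B).rank = A.rank) :
    ∃ D : Matrix n m ℝ, A = A * B * D := by
  classical
  have hr : LinearMap.range (A * B).mulVecLin = LinearMap.range A.mulVecLin := by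
    apply Submodule.eq_of_le_of_finrank_eq
    · rw [Matrix.mulVecLin_mul]
      exact LinearMap.range_comp_le_range _ _
    · exact h
  have hx : ∀ j : m, ∃ v : n → ℝ, (A * B) *ᵥ v = A *ᵥ (Pi.single j 1) := by
    intro j
    have : A.mulVecLin (Pi.single j 1) ∈ LinearMap.range (A * B).mulVecLin := by
      rw [hr]; exact ⟨_, rfl⟩
    obtain ⟨v, hv⟩ := this
    exact ⟨v, hv⟩
  choose v hv using hx
  refine ⟨Matrix.of fun i j => v j i, ?_⟩
  ext i j
  have := congrFun (hv j) i
  rw [Matrix.mulVec_single_one] at this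
  exact this.symm

theorem exists_left_factor {l m n : Type*} [Fintype l] [Fintype m] [Fintype n]
    (B : Matrix l m ℝ) (A : Matrix m n ℝ) (h : (B * A).rank = A.rank) :
    ∃ D : Matrix m l ℝ, A = D * (B * A) := by
  obtain ⟨D, hD⟩ := exists_right_factor Aᵀ Bᵀ (by
    rw [← Matrix.transpose_mul, Matrix.rank_transpose, Matrix.rank_transpose, h])
  refine ⟨Dᵀ, ?_⟩
  have := congrArg Matrix.transpose hD
  simpa [Matrix.transpose_mul] using this

theorem exists_one_three {m n : Type*} [Fintype m] [Fintype n] (A : Matrix m n ℝ) :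
    ∃ D : Matrix n m ℝ, A * D * A = A ∧ (A * D)ᵀ = A * D := by
  obtain ⟨D, hD⟩ := exists_right_factor Aᵀ A (by
    rw [Matrix.rank_transpose_mul_self, Matrix.rank_transpose])
  have h1 : Dᵀ * (Aᵀ * A) = A := by
    have := congrArg Matrix.transpose hD
    simpa [Matrix.transpose_mul] using this.symm
  have h2 : (A * D)ᵀ = A * D := by
    calc (A * D)ᵀ = Dᵀ * Aᵀ := Matrix.transpose_mul _ _
      _ = Dᵀ * (Aᵀ * A * D) := by rw [← hD]
      _ = Dᵀ * (Aᵀ * A) * D := by simp only [Matrix.mul_assoc]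
      _ = A * D := by rw [h1]
  refine ⟨D, ?_, h2⟩
  rw [← h2, Matrix.transpose_mul, Matrix.mul_assoc, h1]

theorem exists_isMoorePenrose {m n : Type*} [Fintype m] [Fintype n] (A : Matrix m n ℝ) :
    ∃ B, IsMoorePenrose A B := by
  obtain ⟨D, h1, h2⟩ := exists_one_three A
  obtain ⟨E, h3, h4⟩ := exists_one_three Aᵀ
  have h5 : A * Eᵀ * A = A := by
    have := congrArg Matrix.transpose h3
    simpa [Matrix.transpose_mul, Matrix.mul_assoc] using this
  have h6 : (Eᵀ * A)ᵀ = Eᵀ * A := by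
    have := congrArg Matrix.transpose h4
    simpa [Matrix.transpose_mul] using this
  have h7 : A * (Eᵀ * A * D) = A * D := by
    rw [← Matrix.mul_assoc, ← Matrix.mul_assoc, h5]
  have h8 : Eᵀ * A * D * A = Eᵀ * A := by
    rw [Matrix.mul_assoc, Matrix.mul_assoc, ← Matrix.mul_assoc A, h1]
  refine ⟨Eᵀ * A * D, ?_, ?_, ?_, ?_⟩
  · rw [h7, h1]
  · rw [h8, Matrix.mul_assoc, h7, Matrix.mul_assoc]
  · rw [h7, h2]
  · rw [h8, h6]

theorem mul_pinv_mul {m n : Type*} [Fintype m] [Fintype n] (A : Matrix m n ℝ) :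
    A * pinv A * A = A := by
  have h := exists_isMoorePenrose A
  have : pinv A = h.choose := by
    unfold pinv
    exact dif_pos h
  rw [this]
  exact h.choose_spec.1

/-- Matrix pseudoskeleton (CUR) decomposition: if `U = X[I,J]` has the same rank as `X`,
then `X = C U† R`, where `C = X[:,J]` and `R = X[I,:]`. -/
theorem matrix_pseudoskeleton {d₁ d₂ : ℕ} (X : Matrix (Fin d₁) (Fin d₂) ℝ)
    (I : Finset (Fin d₁)) (J : Finset (Fin d₂)) :
    let C : Matrix (Fin d₁) {j // j ∈ J} ℝ :=
      X.submatrix id (fun j : {j // j ∈ J} => (j : Fin d₂))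
    let R : Matrix {i // i ∈ I} (Fin d₂) ℝ :=
      X.submatrix (fun i : {i // i ∈ I} => (i : Fin d₁)) id
    let U : Matrix {i // i ∈ I} {j // j ∈ J} ℝ :=
      X.submatrix (fun i : {i // i ∈ I} => (i : Fin d₁)) (fun j : {j // j ∈ J} => (j : Fin d₂))
    U.rank = X.rank → X = C * pinv U * R := by
  intro C R U hU
  set S : Matrix (Fin d₂) {j // j ∈ J} ℝ :=
    (1 : Matrix (Fin d₂) (Fin d₂) ℝ).submatrix id (fun j => (j : Fin d₂)) with hS
  set T : Matrix {i // i ∈ I} (Fin d₁) ℝ :=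
    (1 : Matrix (Fin d₁) (Fin d₁) ℝ).submatrix (fun i => (i : Fin d₁)) id with hT
  have hC : C = X * S := by
    ext i j; simp [C, S, Matrix.mul_apply, Matrix.one_apply]
  have hR : R = T * X := by
    ext i j; simp [R, T, Matrix.mul_apply, Matrix.one_apply]
  have hUC : U = T * C := by
    ext i j; simp [U, C, T, Matrix.mul_apply, Matrix.one_apply]
  have hUR : U = R * S := by
    ext i j; simp [U, R, S, Matrix.mul_apply, Matrix.one_apply]
  have rC : (X * S).rank = X.rank := by
    apply le_antisymm (Matrix.rank_mul_le_left _ _)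
    rw [← hU, hUC, hC]
    exact Matrix.rank_mul_le_right _ _
  have rR : (T * X).rank = X.rank := by
    apply le_antisymm (Matrix.rank_mul_le_right _ _)
    rw [← hU, hUR, hR]
    exact Matrix.rank_mul_le_left _ _
  obtain ⟨D, hD⟩ := exists_right_factor X S rC
  obtain ⟨E, hE⟩ := exists_left_factor T X rR
  rw [← hC] at hD
  rw [← hR] at hE
  have hC2 : C = E * U := by rw [hUR, ← Matrix.mul_assoc, ← hE, hC]
  have hR2 : R = U * D := by rw [hUC, Matrix.mul_assoc, ← hD, hR]
  calc X = C * D := hD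
    _ = E * U * D := by rw [← hC2]
    _ = E * (U * pinv U * U) * D := by rw [mul_pinv_mul]
    _ = (E * U) * pinv U * (U * D) := by simp only [Matrix.mul_assoc]
    _ = C * pinv U * R := by rw [← hC2, ← hR2]
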